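/- arXiv:2109.13854 — 4 statements merged into one kernel-verified Lean document; each statement's English description precedes it below -/
import Mathlib

section
/- Let a < 0, α > 0, k₃ ≠ 0, and k₄ be reals, set c = √(a² + 1), and suppose k₃ e^{2ct} + 1 ≠ 0 on an interval I. Define x(t) = a + c − 2c/(k₃ e^{2ct} + 1) and p(t) = k₄·(k₃ e^{2ct} + 1)²/e^{2ct} + (1 + α)(k₃ e^{2ct} + 1)/(2c k₃ e^{2ct}). Then p satisfies ṗ(t) = 2 x(t) p(t) − 2a p(t) − 1 − α for all t ∈ I. -/
/-!
The state solves the Riccati equation `ẋ = c² - (x - a)²`, which is `ẋ = 2ax - x² + 1` when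
`c² = a² + 1`. Along any of its solutions the costate equation `ṗ = 2 (x - a) p - β` is linear in
`p`. Its homogeneous part is solved by `1 / ẋ`, because differentiating the Riccati equation gives
`ẍ = -2 (x - a) ẋ`; and `β / (x - (a - c))`, where `a - c` is an equilibrium of the Riccati
equation, is a particular solution. Writing `ẋ` and `x - (a - c)` in terms of `e = exp (2ct)` turns
`1 / ẋ`, up to a constant factor, and `β / (x - (a - c))` into the two summands of `p`.
-/

section RiccatiFlow

variable {𝕜 𝕂 : Type*} [NontriviallyNormedField 𝕜] [NontriviallyNormedField 𝕂] [NormedAlgebra 𝕜 𝕂]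
  {x : 𝕜 → 𝕂} {a c : 𝕂} {t : 𝕜}

theorem hasDerivAt_inv_riccati_rhs (hx : HasDerivAt x (c ^ 2 - (x t - a) ^ 2) t)
    (hne : c ^ 2 - (x t - a) ^ 2 ≠ 0) :
    HasDerivAt (fun s => (c ^ 2 - (x s - a) ^ 2)⁻¹)
      (2 * (x t - a) * (c ^ 2 - (x t - a) ^ 2)⁻¹) t := by
  have h_rhs : HasDerivAt (fun s => c ^ 2 - (x s - a) ^ 2)
      (-(2 * (x t - a) * (c ^ 2 - (x t - a) ^ 2))) t := by
    simpa using ((hx.sub_const a).fun_pow 2).const_sub (c ^ 2)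
  refine (h_rhs.fun_inv hne).congr_deriv ?_
  field_simp

theorem hasDerivAt_inv_sub_equilibrium (hx : HasDerivAt x (c ^ 2 - (x t - a) ^ 2) t)
    (hne : x t - (a - c) ≠ 0) :
    HasDerivAt (fun s => (x s - (a - c))⁻¹) (2 * (x t - a) * (x t - (a - c))⁻¹ - 1) t := by
  refine ((hx.sub_const (a - c)).fun_inv hne).congr_deriv ?_
  field_simp
  ring

theorem hasDerivAt_costate_of_riccati (A β : 𝕂) (hx : HasDerivAt x (c ^ 2 - (x t - a) ^ 2) t)
    (h_rhs : c ^ 2 - (x t - a) ^ 2 ≠ 0) (h_eq : x t - (a - c) ≠ 0) :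
    HasDerivAt (fun s => A * (c ^ 2 - (x s - a) ^ 2)⁻¹ + β * (x s - (a - c))⁻¹)
      (2 * (x t - a) * (A * (c ^ 2 - (x t - a) ^ 2)⁻¹ + β * (x t - (a - c))⁻¹) - β) t := by
  refine (((hasDerivAt_inv_riccati_rhs hx h_rhs).const_mul A).fun_add
    ((hasDerivAt_inv_sub_equilibrium hx h_eq).const_mul β)).congr_deriv ?_
  ring

end RiccatiFlow

section ClosedForm

variable {𝕂 : Type*} [Field 𝕂]

/-- The solution of the Riccati equation `ẋ = c² - (x - a)²` with integration constant `k`, as a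
function of `e = exp (2ct)` instead of the time `t`, so that it makes sense over any field. -/
def riccatiState (a c k e : 𝕂) : 𝕂 :=
  a + c - 2 * c / (k * e + 1)

/-- The solution of the costate equation `ṗ = 2 (x - a) p - β` along `x = riccatiState a c k₃ e`
with integration constant `k₄`, as a function of `e = exp (2ct)`. -/
def riccatiCostate (c β k₃ k₄ e : 𝕂) : 𝕂 :=
  k₄ * (k₃ * e + 1) ^ 2 / e + β * (k₃ * e + 1) / (2 * c * k₃ * e)

variable {c k e : 𝕂}

theorem riccati_rhs_riccatiState (a : 𝕂) (hD : k * e + 1 ≠ 0) :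
    c ^ 2 - (riccatiState a c k e - a) ^ 2 = (2 * c) ^ 2 * k * e / (k * e + 1) ^ 2 := by
  unfold riccatiState
  field_simp
  ring

theorem riccatiState_sub_equilibrium (a : 𝕂) (hD : k * e + 1 ≠ 0) :
    riccatiState a c k e - (a - c) = 2 * c * k * e / (k * e + 1) := by
  unfold riccatiState
  field_simp
  ring

theorem riccatiCostate_eq_mul_inv_add_mul_inv (a β k₄ : 𝕂) (hc : 2 * c ≠ 0) (hk : k ≠ 0)
    (hD : k * e + 1 ≠ 0) :
    riccatiCostate c β k k₄ e =
      (2 * c) ^ 2 * k * k₄ * (c ^ 2 - (riccatiState a c k e - a) ^ 2)⁻¹ +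
        β * (riccatiState a c k e - (a - c))⁻¹ := by
  have h_factor : (2 * c) ^ 2 * k ≠ 0 := mul_ne_zero (pow_ne_zero 2 hc) hk
  rw [riccati_rhs_riccatiState a hD, riccatiState_sub_equilibrium a hD, inv_div, inv_div,
    riccatiCostate, mul_div_assoc β]
  generalize (2 * c) ^ 2 * k = F at h_factor ⊢
  congr 1
  field_simp

end ClosedForm

section ExponentialTime

variable {𝕜 𝕂 : Type*} [NontriviallyNormedField 𝕜] [NontriviallyNormedField 𝕂] [NormedAlgebra 𝕜 𝕂]
  {E : 𝕜 → 𝕂} {c k : 𝕂} {t : 𝕜}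

theorem hasDerivAt_riccatiState (a : 𝕂) (hE : HasDerivAt E (2 * c * E t) t)
    (hD : k * E t + 1 ≠ 0) :
    HasDerivAt (fun s => riccatiState a c k (E s))
      (c ^ 2 - (riccatiState a c k (E t) - a) ^ 2) t := by
  have h_den : HasDerivAt (fun s => k * E s + 1) (k * (2 * c * E t)) t :=
    (hE.const_mul k).add_const 1
  refine (((hasDerivAt_const t (2 * c)).fun_div h_den hD).const_sub (a + c)).congr_deriv ?_
  rw [riccati_rhs_riccatiState a hD]
  ring

theorem stmt6_general (a β k₄ : 𝕂) (hE : HasDerivAt E (2 * c * E t) t) (hE₀ : E t ≠ 0)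
    (hc : 2 * c ≠ 0) (hk : k ≠ 0) (hD : k * E t + 1 ≠ 0) :
    HasDerivAt (fun s => riccatiCostate c β k k₄ (E s))
      (2 * riccatiState a c k (E t) * riccatiCostate c β k k₄ (E t) -
        2 * a * riccatiCostate c β k k₄ (E t) - β) t := by
  have h_rhs : c ^ 2 - (riccatiState a c k (E t) - a) ^ 2 ≠ 0 := by
    rw [riccati_rhs_riccatiState a hD]
    exact div_ne_zero (mul_ne_zero (mul_ne_zero (pow_ne_zero 2 hc) hk) hE₀) (pow_ne_zero 2 hD)
  have h_eq : riccatiState a c k (E t) - (a - c) ≠ 0 := by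
    rw [riccatiState_sub_equilibrium a hD]
    exact div_ne_zero (mul_ne_zero (mul_ne_zero hc hk) hE₀) hD
  have hD_near : ∀ᶠ s in nhds t, k * E s + 1 ≠ 0 :=
    ((hE.const_mul k).add_const 1).continuousAt.eventually_ne hD
  have h_near := hD_near.mono fun s hs => riccatiCostate_eq_mul_inv_add_mul_inv a β k₄ hc hk hs
  refine ((hasDerivAt_costate_of_riccati ((2 * c) ^ 2 * k * k₄) β
    (hasDerivAt_riccatiState a hE hD) h_rhs h_eq).congr_of_eventuallyEq h_near).congr_deriv ?_
  rw [← riccatiCostate_eq_mul_inv_add_mul_inv a β k₄ hc hk hD]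
  ring

end ExponentialTime

theorem hasDerivAt_real_exp_const_mul (r t : ℝ) :
    HasDerivAt (fun s => Real.exp (r * s)) (r * Real.exp (r * t)) t := by
  simpa [mul_comm] using ((hasDerivAt_id t).const_mul r).exp

theorem stmt6 (a α k₃ k₄ : ℝ) (ha : a < 0) (hα : 0 < α) (hk₃ : k₃ ≠ 0)
    (c : ℝ) (hc : c = Real.sqrt (a ^ 2 + 1))
    (I : Set ℝ) (hI : I.OrdConnected)
    (hden : ∀ t ∈ I, k₃ * Real.exp (2 * c * t) + 1 ≠ 0)
    (x p : ℝ → ℝ)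
    (hx : x = fun t => a + c - 2 * c / (k₃ * Real.exp (2 * c * t) + 1))
    (hp : p = fun t => k₄ * (k₃ * Real.exp (2 * c * t) + 1) ^ 2 / Real.exp (2 * c * t)
      + (1 + α) * (k₃ * Real.exp (2 * c * t) + 1) / (2 * c * k₃ * Real.exp (2 * c * t))) :
    ∀ t ∈ I, HasDerivAt p (2 * x t * p t - 2 * a * p t - 1 - α) t := by
  intro t ht
  have hc₀ : 2 * c ≠ 0 := by rw [hc]; positivity
  subst hx hp
  exact (stmt6_general a (1 + α) k₄ (hasDerivAt_real_exp_const_mul (2 * c) t) (Real.exp_ne_zero _)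
    hc₀ hk₃ (hden t ht)).congr_deriv (sub_sub _ _ _).symm
end

section
/- Let a < 0 and α > 0 be reals with (a + √(a² + 1))² ≤ α ≤ 1/(4a²), and set u* = 2a/√α + 1/α. Then at the point (x, p) = (√α, √α) with control u = u*, both 2ax − x²u + 1 = 0 and 2xpu − 2ap − 1 − αu = 0 hold. Conversely, if x > 0, p ∈ ℝ, u ∈ [0,1] satisfy x·p = α, 2ax − x²u + 1 = 0, and 2xpu − 2ap − 1 − αu = 0, then x = √α, p = √α, and u = 2a/√α + 1/α. -/
/-!
Along the flow, `d(xp)/dt = p - x + xu(xp - α)`. On the switching surface the control therefore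
drops out of the derivative of `xp`, so a stationary point must have `p = x`, hence `x² = α`. On the
diagonal the two rates are opposite, and `ẋ = 0` is linear in `u`.
-/

namespace SensorScheduling

section CommRing

variable {R : Type*} [CommRing R]

/-- The right-hand side of the scalar Riccati equation `ẋ = 2ax - x²u + 1` with source drift `a`
and control `u`. -/
def stateRate (a x u : R) : R :=
  2 * a * x - x ^ 2 * u + 1

/-- The right-hand side of the costate equation `ṗ = 2xpu - 2ap - 1 - αu`, where `α` is the
trade-off parameter. -/
def costateRate (a α x p u : R) : R :=
  2 * x * p * u - 2 * a * p - 1 - α * u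

/-- Stationarity of the state-costate pair `(x, p)` under the constant control `u`, which is not
restricted to the admissible range `[0, 1]`. -/
def IsStationary (a α x p u : R) : Prop :=
  stateRate a x u = 0 ∧ costateRate a α x p u = 0

variable {a α x p u : R}

lemma mul_stateRate_add_mul_costateRate (a α x p u : R) :
    p * stateRate a x u + x * costateRate a α x p u = p - x + x * u * (x * p - α) := by
  unfold stateRate costateRate
  ring

lemma costateRate_sq_self (a x u : R) : costateRate a (x ^ 2) x x u = -stateRate a x u := by
  unfold stateRate costateRate
  ring

lemma IsStationary.costate_eq_state (h : IsStationary a α x p u) (hxp : x * p = α) : p = x := by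
  have hrate := mul_stateRate_add_mul_costateRate a α x p u
  rw [h.1, h.2, hxp, sub_self, mul_zero, mul_zero, mul_zero, add_zero, add_zero] at hrate
  exact sub_eq_zero.mp hrate.symm

lemma isStationary_sq_self_iff : IsStationary a (x ^ 2) x x u ↔ stateRate a x u = 0 := by
  rw [IsStationary, costateRate_sq_self, neg_eq_zero, and_self_iff]

end CommRing

lemma stateRate_eq_zero_iff {K : Type*} [Field K] {a x u : K} (hx : x ≠ 0) :
    stateRate a x u = 0 ↔ u = 2 * a / x + 1 / x ^ 2 := by
  have hfactor : stateRate a x u = x ^ 2 * (2 * a / x + 1 / x ^ 2 - u) := by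
    unfold stateRate
    field_simp
    ring
  rw [hfactor, mul_eq_zero_iff_left (pow_ne_zero 2 hx), sub_eq_zero, eq_comm]

/-- The surface `S = {(x, p) : x > 0, xp = α}` in the state-costate plane. -/
def switchingSurface (α : ℝ) : Set (ℝ × ℝ) :=
  {z | 0 < z.1 ∧ z.1 * z.2 = α}

end SensorScheduling

open SensorScheduling in
theorem stmt9_general {a α x p u : ℝ} (hα : 0 < α) :
    (x, p) ∈ switchingSurface α ∧ IsStationary a α x p u ↔
      x = √α ∧ p = √α ∧ u = 2 * a / √α + 1 / α := by
  obtain ⟨s, hs, rfl⟩ : ∃ s, 0 < s ∧ s ^ 2 = α := ⟨√α, Real.sqrt_pos.mpr hα, Real.sq_sqrt hα.le⟩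
  rw [Real.sqrt_sq hs.le]
  constructor
  · rintro ⟨⟨hx, hxp⟩, hstat⟩
    obtain rfl : p = x := hstat.costate_eq_state hxp
    obtain rfl : p = s := (pow_left_inj₀ hx.le hs.le two_ne_zero).mp ((sq p).trans hxp)
    exact ⟨rfl, rfl, (stateRate_eq_zero_iff hs.ne').mp (isStationary_sq_self_iff.mp hstat)⟩
  · rintro ⟨rfl, rfl, hu⟩
    exact ⟨⟨hs, (sq _).symm⟩, isStationary_sq_self_iff.mpr ((stateRate_eq_zero_iff hs.ne').mpr hu)⟩

theorem stmt9 (a α : ℝ) (ha : a < 0) (hα : 0 < α)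
    (hlo : (a + Real.sqrt (a ^ 2 + 1)) ^ 2 ≤ α) (hhi : α ≤ 1 / (4 * a ^ 2))
    (ustar : ℝ) (hustar : ustar = 2 * a / Real.sqrt α + 1 / α) :
    (2 * a * Real.sqrt α - (Real.sqrt α) ^ 2 * ustar + 1 = 0 ∧
      2 * Real.sqrt α * Real.sqrt α * ustar - 2 * a * Real.sqrt α - 1 - α * ustar = 0) ∧
    (∀ x p u : ℝ, 0 < x → u ∈ Set.Icc (0 : ℝ) 1 → x * p = α →
      2 * a * x - x ^ 2 * u + 1 = 0 →
      2 * x * p * u - 2 * a * p - 1 - α * u = 0 →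
      x = Real.sqrt α ∧ p = Real.sqrt α ∧ u = 2 * a / Real.sqrt α + 1 / α) := by
  subst hustar
  exact ⟨((stmt9_general hα).mpr ⟨rfl, rfl, rfl⟩).2, fun x p u hx _ hxp hstate hcostate =>
    (stmt9_general hα).mp ⟨⟨hx, hxp⟩, hstate, hcostate⟩⟩
end

section
/- Let a < 0, α > 0, and t₁ ∈ ℝ be reals with 2a√α + 1 > 0. Define t'' = t₁ − ln(2a√α + 1)/(2a), and let (x, p) be the solution of ẋ = 2ax + 1, ṗ = −2ap − 1 with x(t'') = √α and p(t'') = √α. Then t'' < t₁, p(t₁) = 0, and x(t₁) = 2aα + 2√α. -/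
/-!
Along the flow the quantities `2ax + 1` and `2ap + 1` satisfy the homogeneous equations
`ż = 2az` and `ż = -2az`, so they are multiplied by `e^τ` and `e^{-τ}` with `τ = 2a(t₁ - t'')`.
Both start from `r = 2a√α + 1`, and `t''` is chosen so that `e^τ = r`. Hence they end at `r²` and
`1`, which give `x(t₁)` and `p(t₁)`.
-/

section LinearODE

variable {E : Type*} [NormedAddCommGroup E] [NormedSpace ℝ E] {S : Set ℝ} {c s t : ℝ}

theorem eq_exp_smul_of_hasDerivWithinAt_smul {z : ℝ → E} (hS : Convex ℝ S)
    (hz : ∀ r ∈ S, HasDerivWithinAt z (c • z r) S r) (hs : s ∈ S) (ht : t ∈ S) :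
    z t = Real.exp (c * (t - s)) • z s := by
  have hderiv : ∀ r ∈ S, HasDerivWithinAt (fun r ↦ Real.exp (c * (t - r)) • z r) 0 S r := by
    intro r hr
    have hexp : HasDerivAt (fun r ↦ Real.exp (c * (t - r))) (Real.exp (c * (t - r)) * -c) r := by
      simpa using (((hasDerivAt_id r).const_sub t).const_mul c).exp
    refine (hexp.hasDerivWithinAt.smul (hz r hr)).congr_deriv ?_
    module
  have hconst := hS.norm_image_sub_le_of_norm_hasDerivWithin_le hderiv
    (fun _ _ ↦ norm_zero.le) hs ht
  simpa [sub_eq_zero] using hconst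

theorem smul_add_eq_exp_smul_of_hasDerivWithinAt {y : ℝ → E} {d : E} (hS : Convex ℝ S)
    (hy : ∀ r ∈ S, HasDerivWithinAt y (c • y r + d) S r) (hs : s ∈ S) (ht : t ∈ S) :
    c • y t + d = Real.exp (c * (t - s)) • (c • y s + d) :=
  eq_exp_smul_of_hasDerivWithinAt_smul (z := fun r ↦ c • y r + d) hS
    (fun r hr ↦ ((hy r hr).const_smul c).add_const d) hs ht

end LinearODE

theorem log_mul_add_one_div_pos {b s : ℝ} (hb : b ≠ 0) (hs : 0 < s) (hpos : 0 < b * s + 1) :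
    0 < Real.log (b * s + 1) / b := by
  rcases hb.lt_or_gt with hbneg | hbpos
  · have hbs : b * s < 0 := mul_neg_of_neg_of_pos hbneg hs
    exact div_pos_of_neg_of_neg (Real.log_neg hpos (by linarith)) hbneg
  · have hbs : 0 < b * s := mul_pos hbpos hs
    exact div_pos (Real.log_pos (by linarith)) hbpos

theorem stmt14_general (a α t₁ : ℝ) (ha : a ≠ 0) (hα : 0 < α)
    (hpos : 0 < 2 * a * Real.sqrt α + 1)
    (t'' : ℝ) (ht'' : t'' = t₁ - Real.log (2 * a * Real.sqrt α + 1) / (2 * a))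
    (x p : ℝ → ℝ)
    (hx : ∀ t ∈ Set.Icc t'' t₁, HasDerivWithinAt x (2 * a * x t + 1) (Set.Icc t'' t₁) t)
    (hp : ∀ t ∈ Set.Icc t'' t₁, HasDerivWithinAt p (-(2 * a) * p t - 1) (Set.Icc t'' t₁) t)
    (hx'' : x t'' = Real.sqrt α) (hp'' : p t'' = Real.sqrt α) :
    t'' < t₁ ∧ p t₁ = 0 ∧ x t₁ = 2 * a * α + 2 * Real.sqrt α := by
  have h2a : 2 * a ≠ 0 := mul_ne_zero two_ne_zero ha
  have hlt : t'' < t₁ :=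
    ht'' ▸ sub_lt_self t₁ (log_mul_add_one_div_pos h2a (Real.sqrt_pos.mpr hα) hpos)
  have hexp : Real.exp (2 * a * (t₁ - t'')) = 2 * a * Real.sqrt α + 1 := by
    rw [ht'', sub_sub_cancel, mul_div_cancel₀ _ h2a, Real.exp_log hpos]
  have hstart := Set.left_mem_Icc.mpr hlt.le
  have hend := Set.right_mem_Icc.mpr hlt.le
  have hx₁ : 2 * a * x t₁ + 1 = (2 * a * Real.sqrt α + 1) * (2 * a * Real.sqrt α + 1) := by
    simpa only [smul_eq_mul, hexp, hx''] using
      smul_add_eq_exp_smul_of_hasDerivWithinAt (convex_Icc t'' t₁) hx hstart hend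
  have hexp_neg : Real.exp (-(2 * a) * (t₁ - t'')) = (2 * a * Real.sqrt α + 1)⁻¹ := by
    rw [neg_mul, Real.exp_neg, hexp]
  have hp₁ : -(2 * a) * p t₁ + -1 =
      (2 * a * Real.sqrt α + 1)⁻¹ * (-(2 * a) * Real.sqrt α + -1) := by
    simp only [sub_eq_add_neg] at hp
    simpa only [smul_eq_mul, hexp_neg, hp''] using
      smul_add_eq_exp_smul_of_hasDerivWithinAt (convex_Icc t'' t₁) hp hstart hend
  refine ⟨hlt, ?_, ?_⟩
  · apply mul_left_cancel₀ h2a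
    linear_combination -hp₁ + inv_mul_cancel₀ hpos.ne'
  · apply mul_left_cancel₀ h2a
    linear_combination hx₁ + 4 * a ^ 2 * Real.mul_self_sqrt hα.le

theorem stmt14 (a α t₁ : ℝ) (ha : a < 0) (hα : 0 < α)
    (hpos : 0 < 2 * a * Real.sqrt α + 1)
    (t'' : ℝ) (ht'' : t'' = t₁ - Real.log (2 * a * Real.sqrt α + 1) / (2 * a))
    (x p : ℝ → ℝ)
    (hx : ∀ t : ℝ, HasDerivAt x (2 * a * x t + 1) t)
    (hp : ∀ t : ℝ, HasDerivAt p (-(2 * a) * p t - 1) t)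
    (hx'' : x t'' = Real.sqrt α) (hp'' : p t'' = Real.sqrt α) :
    t'' < t₁ ∧ p t₁ = 0 ∧ x t₁ = 2 * a * α + 2 * Real.sqrt α :=
  stmt14_general a α t₁ ha.ne hα hpos t'' ht'' x p (fun t _ ↦ (hx t).hasDerivWithinAt)
    (fun t _ ↦ (hp t).hasDerivWithinAt) hx'' hp''
end

section
/- Let a < 0, α > 0, t₀ < t₁, and x₀ ≥ 0 be reals, set c = √(a² + 1), and suppose x₀ ≠ a + c and k₃ = ((c − a + x₀)/(c + a − x₀))e^{−2ct₀} satisfies k₃ e^{2ct} + 1 ≠ 0 on [t₀, t₁]. Define x̂(t) = a + c − 2c/(k₃ e^{2ct} + 1) and p̄(t) = (e^{−2a(t−t₁)} − 1)/(2a). If t' ∈ (t₀, t₁) satisfies x̂(t')·p̄(t') = α, then the piecewise function x(t) equal to x̂(t) on [t₀, t'] and to the solution of ẋ = 2ax + 1 with x(t') = x̂(t') on [t', t₁], together with the control u(t) = 1 on [t₀, t') and u(t) = 0 on [t', t₁], satisfies ẋ(t) = 2a x(t) − x(t)² u(t) + 1 for all t in [t₀, t₁] except at t', with x(t₀) = x₀.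 -/
/-!
Completing the square in the Riccati equation `x' = 2 a x - x² + q` gives
`x' = c² - (x - a)²` with `c² = a² + q`. For every solution other than the constant `a + c`, the
ratio `D = 2 c / (a + c - x)` satisfies the linear equation `D' = 2 c (D - 1)`, so
`D = k exp (2 c t) + 1`; solving for `x` gives `x̂`, and the value of `x` at the initial time
determines `k`. A differential equation is a local condition, so away from the switching time the
concatenated trajectory inherits it from the piece it follows there.
-/

open Set Filter Topology

section Concatenation

variable {T E : Type*} [LinearOrder T]

/-- The trajectory that follows `f` up to and including time `τ`, and `g` afterwards. -/
def concatAt (τ : T) (f g : T → E) (t : T) : E :=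
  if t ≤ τ then f t else g t

variable {τ t : T} {f g : T → E}

theorem concatAt_of_le (ht : t ≤ τ) : concatAt τ f g t = f t := if_pos ht

theorem concatAt_of_lt (ht : τ < t) : concatAt τ f g t = g t := if_neg ht.not_ge

theorem concatAt_of_ge (h : f τ = g τ) (ht : τ ≤ t) : concatAt τ f g t = g t := by
  rcases ht.eq_or_lt with rfl | ht
  · rw [concatAt_of_le le_rfl, h]
  · exact concatAt_of_lt ht

variable [TopologicalSpace T]

theorem concatAt_eventuallyEq_left [ClosedIciTopology T] (ht : t < τ) :
    concatAt τ f g =ᶠ[𝓝 t] f :=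
  (eventually_lt_nhds ht).mono fun _ hs => concatAt_of_le hs.le

theorem concatAt_eventuallyEq_right [ClosedIicTopology T] (ht : τ < t) :
    concatAt τ f g =ᶠ[𝓝 t] g :=
  (eventually_gt_nhds ht).mono fun _ hs => concatAt_of_lt hs

theorem continuousOn_concatAt [OrderClosedTopology T] [TopologicalSpace E] {b d : T}
    (hf : ContinuousOn f (Icc b τ)) (hg : ContinuousOn g (Icc τ d)) (h : f τ = g τ) :
    ContinuousOn (concatAt τ f g) (Icc b d) :=
  ((hf.congr fun _ ht => concatAt_of_le ht.2).union_of_isClosed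
    (hg.congr fun _ ht => concatAt_of_ge h ht.1) isClosed_Icc isClosed_Icc).mono
    Icc_subset_Icc_union_Icc

end Concatenation

theorem hasDerivAt_concatAt_of_ne {E U : Type*} [NormedAddCommGroup E] [NormedSpace ℝ E]
    {F : E → U → E} {f g : ℝ → E} {v w : U} {τ t : ℝ}
    (hf : t < τ → HasDerivAt f (F (f t) v) t) (hg : τ < t → HasDerivAt g (F (g t) w) t)
    (ht : t ≠ τ) :
    HasDerivAt (concatAt τ f g) (F (concatAt τ f g t) (if t < τ then v else w)) t := by
  rcases ht.lt_or_gt with hlt | hgt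
  · rw [concatAt_of_le hlt.le, if_pos hlt]
    exact (hf hlt).congr_of_eventuallyEq (concatAt_eventuallyEq_left hlt)
  · rw [concatAt_of_lt hgt, if_neg hgt.not_gt]
    exact (hg hgt).congr_of_eventuallyEq (concatAt_eventuallyEq_right hgt)

section Riccati

/-- The rate of change of the estimation error variance `x` of a scalar source with drift `a` and
noise intensity `q`, observed with sensor control `u`. -/
def varianceRate (a q x u : ℝ) : ℝ :=
  2 * a * x - x ^ 2 * u + q

/-- The one-parameter family of solutions of the Riccati equation `x' = 2 a x - x² + (c² - a²)`,
indexed by the integration constant `k`. The value at a zero of the denominator is junk. -/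
noncomputable def riccatiSolution (a c k t : ℝ) : ℝ :=
  a + c - 2 * c / (k * Real.exp (2 * c * t) + 1)

/-- The integration constant of the member of `riccatiSolution a c` through `x₀` at time `t₀`.
The constant solution `x₀ = a + c` is not of this form and gives a junk value. -/
noncomputable def riccatiConst (a c t₀ x₀ : ℝ) : ℝ :=
  (c - a + x₀) / (c + a - x₀) * Real.exp (-(2 * c) * t₀)

variable {a c : ℝ}

theorem hasDerivAt_mul_exp_add_one (k r t : ℝ) :
    HasDerivAt (fun s => k * Real.exp (r * s) + 1) (r * (k * Real.exp (r * t))) t := by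
  have hlin : HasDerivAt (fun s => r * s) r t := by
    simpa using (hasDerivAt_id t).const_mul r
  exact ((hlin.exp.const_mul k).add_const 1).congr_deriv (by ring)

theorem hasDerivAt_riccatiSolution {q k t : ℝ} (hc : c ^ 2 = a ^ 2 + q)
    (hden : k * Real.exp (2 * c * t) + 1 ≠ 0) :
    HasDerivAt (riccatiSolution a c k) (varianceRate a q (riccatiSolution a c k t) 1) t := by
  have hquot := ((hasDerivAt_const t (2 * c)).fun_div
    (hasDerivAt_mul_exp_add_one k (2 * c) t) hden).const_sub (a + c)
  refine hquot.congr_deriv ?_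
  obtain rfl : q = c ^ 2 - a ^ 2 := by linarith
  unfold varianceRate riccatiSolution
  field_simp
  ring

theorem riccatiConst_mul_exp_add_one {t₀ x₀ : ℝ} (hx₀ : x₀ ≠ a + c) :
    riccatiConst a c t₀ x₀ * Real.exp (2 * c * t₀) + 1 = 2 * c / (c + a - x₀) := by
  have hsub : c + a - x₀ ≠ 0 := fun h => hx₀ (by linarith)
  have hexp : Real.exp (-(2 * c) * t₀) * Real.exp (2 * c * t₀) = 1 := by
    rw [← Real.exp_add, neg_mul, neg_add_cancel, Real.exp_zero]
  rw [riccatiConst, mul_assoc, hexp]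
  field_simp
  ring

theorem riccatiSolution_riccatiConst {t₀ x₀ : ℝ} (hc : c ≠ 0) (hx₀ : x₀ ≠ a + c) :
    riccatiSolution a c (riccatiConst a c t₀ x₀) t₀ = x₀ := by
  rw [riccatiSolution, riccatiConst_mul_exp_add_one hx₀,
    div_div_cancel₀ (mul_ne_zero two_ne_zero hc)]
  ring

end Riccati

theorem stmt19_general {a c q t₀ t₁ τ x₀ : ℝ} {y : ℝ → ℝ} (hc₀ : c ≠ 0)
    (hc : c ^ 2 = a ^ 2 + q) (hx₀ : x₀ ≠ a + c) (hτ : t₀ ≤ τ)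
    (hden : ∀ t ∈ Icc t₀ τ, riccatiConst a c t₀ x₀ * Real.exp (2 * c * t) + 1 ≠ 0)
    (hy : ∀ t ∈ Icc τ t₁, HasDerivAt y (varianceRate a q (y t) 0) t)
    (hyτ : y τ = riccatiSolution a c (riccatiConst a c t₀ x₀) τ) :
    let x := concatAt τ (riccatiSolution a c (riccatiConst a c t₀ x₀)) y
    ContinuousOn x (Icc t₀ t₁) ∧
      (∀ t ∈ Icc t₀ t₁, t ≠ τ →
        HasDerivAt x (varianceRate a q (x t) (if t < τ then 1 else 0)) t) ∧
      x t₀ = x₀ := by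
  have hxhat := fun t ht => hasDerivAt_riccatiSolution hc (hden t ht)
  refine ⟨continuousOn_concatAt (HasDerivAt.continuousOn hxhat) (HasDerivAt.continuousOn hy)
    hyτ.symm, fun t ht hne => ?_, ?_⟩
  · exact hasDerivAt_concatAt_of_ne (fun hlt => hxhat t ⟨ht.1, hlt.le⟩)
      (fun hgt => hy t ⟨hgt.le, ht.2⟩) hne
  · exact (concatAt_of_le hτ).trans (riccatiSolution_riccatiConst hc₀ hx₀)

theorem stmt19 (a α t₀ t₁ x₀ : ℝ) (ha : a < 0) (hα : 0 < α) (ht : t₀ < t₁)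
    (hx₀ : 0 ≤ x₀)
    (c : ℝ) (hc : c = Real.sqrt (a ^ 2 + 1)) (hne : x₀ ≠ a + c)
    (k₃ : ℝ) (hk₃ : k₃ = ((c - a + x₀) / (c + a - x₀)) * Real.exp (-(2 * c) * t₀))
    (hden : ∀ t ∈ Set.Icc t₀ t₁, k₃ * Real.exp (2 * c * t) + 1 ≠ 0)
    (xhat pbar : ℝ → ℝ)
    (hxhat : xhat = fun t => a + c - 2 * c / (k₃ * Real.exp (2 * c * t) + 1))
    (hpbar : pbar = fun t => (Real.exp (-(2 * a) * (t - t₁)) - 1) / (2 * a))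
    (t' : ℝ) (ht' : t' ∈ Set.Ioo t₀ t₁) (hsw : xhat t' * pbar t' = α)
    (y : ℝ → ℝ) (hy : ∀ t : ℝ, HasDerivAt y (2 * a * y t + 1) t)
    (hy' : y t' = xhat t')
    (x u : ℝ → ℝ)
    (hx : x = fun t => if t ≤ t' then xhat t else y t)
    (hu : u = fun t => if t < t' then 1 else 0) :
    (∀ t ∈ Set.Icc t₀ t₁, t ≠ t' →
      HasDerivAt x (2 * a * x t - (x t) ^ 2 * u t + 1) t) ∧
    x t₀ = x₀ := by
  have hc₀ : 0 < c := hc ▸ Real.sqrt_pos.mpr (by positivity)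
  have hc_sq : c ^ 2 = a ^ 2 + 1 := hc ▸ Real.sq_sqrt (by positivity)
  subst hk₃ hxhat hx hu
  exact (stmt19_general hc₀.ne' hc_sq hne ht'.1.le
    (fun t ht => hden t ⟨ht.1, ht.2.trans ht'.2.le⟩)
    (fun t _ => by simpa [varianceRate] using hy t) hy').2
end
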